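/- For every irrational β ∈ (0,1) and every n ≥ 1, β lies strictly between the consecutive convergents p_{n−1}/q_{n−1} and pₙ/qₙ of its continued fraction expansion, and the quantity Im yₙ := sqrt(|β − p_{n−1}(β)/q_{n−1}(β)| · |β − pₙ(β)/qₙ(β)|) — the imaginary part of the intersection point of the vertical geodesic at β with the geodesic semicircle in the upper half-plane whose endpoints are p_{n−1}/q_{n−1} and pₙ/qₙ — satisfies the estimate 1/(2·qₙ(β)·q_{n+1}(β)) < Im yₙ < 1/(2·q_{n−1}(β)·qₙ(β)). -/

import Mathlib

set_option synthInstance.maxHeartbeats 1000000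
set_option maxHeartbeats 1000000

open Filter MeasureTheory

noncomputable def gaussMap (x : ℝ) : ℝ := 1 / x - ⌊1 / x⌋

noncomputable def cfDigit (x : ℝ) (n : ℕ) : ℤ := ⌊1 / (gaussMap^[n] x)⌋

noncomputable def cfP (x : ℝ) : ℕ → ℤ
  | 0 => 0
  | 1 => 1
  | n + 2 => cfDigit x (n + 1) * cfP x (n + 1) + cfP x n

noncomputable def cfQ (x : ℝ) : ℕ → ℤ
  | 0 => 1
  | 1 => cfDigit x 0
  | n + 2 => cfDigit x (n + 1) * cfQ x (n + 1) + cfQ x n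

lemma gm_prop (x : ℝ) (h : x ∈ Set.Ioo (0 : ℝ) 1) (hI : Irrational x) :
    gaussMap x ∈ Set.Ioo (0 : ℝ) 1 ∧ Irrational (gaussMap x) := by
  have h1 : Irrational (1 / x) := by
    rw [one_div]; exact hI.inv
  have h2 : Irrational (gaussMap x) := by
    unfold gaussMap
    exact h1.sub_intCast _
  refine ⟨⟨?_, ?_⟩, h2⟩
  · have h3 : 0 ≤ gaussMap x := by
      unfold gaussMap
      linarith [Int.floor_le (1 / x)]
    exact lt_of_le_of_ne h3 (Ne.symm h2.ne_zero)
  · unfold gaussMap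
    linarith [Int.lt_floor_add_one (1 / x)]

lemma gm_iter (x : ℝ) (h : x ∈ Set.Ioo (0 : ℝ) 1) (hI : Irrational x) (n : ℕ) :
    gaussMap^[n] x ∈ Set.Ioo (0 : ℝ) 1 ∧ Irrational (gaussMap^[n] x) := by
  induction n with
  | zero => exact ⟨h, hI⟩
  | succ k ih =>
    rw [Function.iterate_succ_apply']
    exact gm_prop _ ih.1 ih.2

lemma digit_pos (x : ℝ) (h : x ∈ Set.Ioo (0 : ℝ) 1) (hI : Irrational x) (n : ℕ) :
    1 ≤ cfDigit x n := by
  obtain ⟨⟨h0, h1⟩, -⟩ := gm_iter x h hI n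
  unfold cfDigit
  rw [Int.le_floor, Int.cast_one]
  rw [le_div_iff₀ h0]
  linarith

lemma digit_eq (x : ℝ) (h : x ∈ Set.Ioo (0 : ℝ) 1) (hI : Irrational x) (n : ℕ) :
    gaussMap^[n] x * ((cfDigit x n : ℝ) + gaussMap^[n+1] x) = 1 := by
  obtain ⟨⟨h0, h1⟩, -⟩ := gm_iter x h hI n
  rw [Function.iterate_succ_apply']
  unfold cfDigit
  rw [show gaussMap (gaussMap^[n] x) = 1 / (gaussMap^[n] x) - ⌊1 / (gaussMap^[n] x)⌋ from rfl]
  field_simp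
  ring

lemma cf_inv (x : ℝ) (h : x ∈ Set.Ioo (0 : ℝ) 1) (hI : Irrational x) (m : ℕ) :
    1 ≤ cfQ x m ∧ cfQ x m ≤ cfQ x (m+1) ∧
    (cfP x m * cfQ x (m+1) - cfP x (m+1) * cfQ x m = 1 ∨
      cfP x m * cfQ x (m+1) - cfP x (m+1) * cfQ x m = -1) ∧
    x * (cfQ x (m+1) + gaussMap^[m+1] x * cfQ x m) =
      cfP x (m+1) + gaussMap^[m+1] x * cfP x m := by
  induction m with
  | zero =>
    have h1 := digit_pos x h hI 0
    have h2 := digit_eq x h hI 0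
    refine ⟨by simp [cfQ], by simpa [cfQ] using h1, by simp [cfQ, cfP], ?_⟩
    simp only [cfQ, cfP, Function.iterate_zero, id] at h2 ⊢
    push_cast
    linarith
  | succ k ih =>
    obtain ⟨i1, i2, i3, i4⟩ := ih
    have h1 := digit_pos x h hI (k+1)
    have h2 := digit_eq x h hI (k+1)
    obtain ⟨⟨h0, -⟩, -⟩ := gm_iter x h hI (k+1)
    have eQ : cfQ x (k+1+1) = cfDigit x (k + 1) * cfQ x (k + 1) + cfQ x k := by rw [cfQ]
    have eP : cfP x (k+1+1) = cfDigit x (k + 1) * cfP x (k + 1) + cfP x k := by rw [cfP]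
    rw [eQ, eP]
    refine ⟨by linarith, by nlinarith, ?_, ?_⟩
    · rcases i3 with i | i
      · right; linear_combination -i
      · left; linear_combination -i
    · push_cast
      generalize gaussMap^[k+1+1] x = s at *
      generalize gaussMap^[k+1] x = t at *
      apply mul_left_cancel₀ h0.ne'
      linear_combination i4 + (x * cfQ x (k+1) - cfP x (k+1)) * h2

lemma key (β t a b c k p q e : ℝ) (ha : 0 < a) (hab : a ≤ b) (ht : 0 < t) (ht1 : t < 1)
    (hk : 1 ≤ k) (hkt : 1 < t * (k + 1)) (hc : c = k * b + a)
    (he : p * b - q * a = e) (he1 : e = 1 ∨ e = -1)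
    (hb : β * (b + t * a) = q + t * p) :
    ((p / a < β ∧ β < q / b) ∨ (q / b < β ∧ β < p / a)) ∧
    1 / (2 * b * c) < Real.sqrt (|β - p / a| * |β - q / b|) ∧
    Real.sqrt (|β - p / a| * |β - q / b|) < 1 / (2 * a * b) := by
  have hb0 : 0 < b := by linarith
  have hc0 : 0 < c := by rw [hc]; positivity
  have hd : 0 < b + t * a := by positivity
  have e1 : β - p / a = -e * (1 / (a * (b + t * a))) := by
    have : β = (q + t * p) / (b + t * a) := by rw [eq_div_iff hd.ne']; exact hb
    rw [this, ← he]; field_simp; ring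
  have e2 : β - q / b = e * (t / (b * (b + t * a))) := by
    have : β = (q + t * p) / (b + t * a) := by rw [eq_div_iff hd.ne']; exact hb
    rw [this, ← he]; field_simp; ring
  have p1 : 0 < 1 / (a * (b + t * a)) := by positivity
  have p2 : 0 < t / (b * (b + t * a)) := by positivity
  have ea : |e| = 1 := by rcases he1 with h | h <;> simp [h]
  have hprod : |β - p / a| * |β - q / b| = t / (a * b * (b + t * a) ^ 2) := by
    rw [e1, e2, abs_mul, abs_mul, abs_neg, ea, abs_of_pos p1, abs_of_pos p2]
    field_simp
  refine ⟨?_, ?_, ?_⟩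
  · rcases he1 with h | h
    · right; rw [h] at e1 e2; constructor <;> linarith
    · left; rw [h] at e1 e2; constructor <;> linarith
  · rw [hprod]
    apply Real.lt_sqrt_of_sq_lt
    rw [div_pow, div_lt_div_iff₀ (by positivity) (by positivity)]
    have hta : b + t * a < 2 * (t * c) := by
      rw [hc]
      have : 0 < t * a := by positivity
      have h3 : b * 1 < b * (t * (k + 1)) := mul_lt_mul_of_pos_left hkt hb0
      have h4 : 0 ≤ t * b * (k - 1) := mul_nonneg (by positivity) (by linarith)
      nlinarith
    have h5 : (b + t * a) ^ 2 < (2 * (t * c)) ^ 2 := by gcongr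
    have h6 : a * b * (b + t * a) ^ 2 < a * b * (2 * (t * c)) ^ 2 := by gcongr
    have h7 : t * a ≤ b := by nlinarith
    have h8 : 4 * t * b * c ^ 2 * (t * a) ≤ 4 * t * b * c ^ 2 * b := by gcongr
    nlinarith
  · rw [hprod, Real.sqrt_lt' (by positivity), div_pow,
      div_lt_div_iff₀ (by positivity) (by positivity)]
    have h7 : 0 < b - t * a := by nlinarith
    have h8 : 0 < a * b * (b - t * a) ^ 2 := by positivity
    nlinarith

/-- `β` lies strictly between consecutive convergents, and the imaginary part of
the intersection of the vertical geodesic at `β` with the geodesic semicircle joining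
`p_{n-1}/q_{n-1}` and `pₙ/qₙ` satisfies `1/(2 qₙ q_{n+1}) < Im yₙ < 1/(2 q_{n-1} qₙ)`. -/
theorem stmt6 (β : ℝ) (hβ : β ∈ Set.Ioo (0 : ℝ) 1) (hβI : Irrational β)
    (n : ℕ) (hn : 1 ≤ n) :
    (((cfP β (n - 1) : ℝ) / (cfQ β (n - 1) : ℝ) < β ∧ β < (cfP β n : ℝ) / (cfQ β n : ℝ)) ∨
      ((cfP β n : ℝ) / (cfQ β n : ℝ) < β ∧ β < (cfP β (n - 1) : ℝ) / (cfQ β (n - 1) : ℝ))) ∧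
    1 / (2 * (cfQ β n : ℝ) * (cfQ β (n + 1) : ℝ)) <
      Real.sqrt (|β - (cfP β (n - 1) : ℝ) / (cfQ β (n - 1) : ℝ)| *
        |β - (cfP β n : ℝ) / (cfQ β n : ℝ)|) ∧
    Real.sqrt (|β - (cfP β (n - 1) : ℝ) / (cfQ β (n - 1) : ℝ)| *
        |β - (cfP β n : ℝ) / (cfQ β n : ℝ)|) <
      1 / (2 * (cfQ β (n - 1) : ℝ) * (cfQ β n : ℝ)) := by
  obtain ⟨m, rfl⟩ : ∃ m, n = m + 1 := ⟨n - 1, by omega⟩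
  rw [Nat.add_sub_cancel]
  obtain ⟨i1, i2, i3, i4⟩ := cf_inv β hβ hβI m
  have h1 := digit_pos β hβ hβI (m+1)
  obtain ⟨⟨h0, ht1⟩, -⟩ := gm_iter β hβ hβI (m+1)
  have h2 := digit_eq β hβ hβI (m+1)
  obtain ⟨⟨-, hs1⟩, -⟩ := gm_iter β hβ hβI (m+1+1)
  have eQ : cfQ β (m+1+1) = cfDigit β (m + 1) * cfQ β (m + 1) + cfQ β m := by rw [cfQ]
  refine key β (gaussMap^[m+1] β) (cfQ β m) (cfQ β (m+1)) (cfQ β (m+1+1)) (cfDigit β (m+1))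
    (cfP β m) (cfP β (m+1)) _ (by exact_mod_cast i1) (by exact_mod_cast i2) h0 ht1
    (by exact_mod_cast h1) ?_ (by rw [eQ]; push_cast; ring) rfl (by exact_mod_cast i3) i4
  nlinarith
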